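/- Let M be an m-manifold, N a connected n-manifold, and ℱ a foliation of dimension n on the product (m+n)-manifold M × N. Suppose there is a dense subset D ⊆ M such that for each d ∈ D the set {d} × N is a leaf of ℱ. Then for every x ∈ M the set {x} × N is a leaf of ℱ, i.e. ℱ is the trivial product foliation with leaves {x} × N. -/

import Mathlib

noncomputable section

open Set Topology Filter

universe u

/-! ### The long ray and the long line -/

/-- The first uncountable ordinal `ω₁`, viewed as the linearly ordered set of all
countable ordinals. -/
def Omega1 : Type 1 := {o : Ordinal.{0} // o < (Cardinal.aleph 1).ord}

instance : LinearOrder Omega1 :=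
  inferInstanceAs (LinearOrder {o : Ordinal.{0} // o < (Cardinal.aleph 1).ord})

/-- `ω₁` carries the order topology. -/
instance : TopologicalSpace Omega1 := Preorder.topology Omega1

instance : OrderTopology Omega1 := ⟨rfl⟩

/-- The underlying countable ordinal of an element of `ω₁`. -/
def Omega1.toOrdinal : Omega1 → Ordinal.{0} := Subtype.val

/-- The closed long ray `𝕃≥0`: the set `ω₁ × [0,1)` with the lexicographic order and the
order topology. -/
def ClosedLongRay : Type 1 := Omega1 ×ₗ (Set.Ico (0:ℝ) 1)

instance : LinearOrder ClosedLongRay :=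
  inferInstanceAs (LinearOrder (Omega1 ×ₗ (Set.Ico (0:ℝ) 1)))

instance : TopologicalSpace ClosedLongRay := Preorder.topology ClosedLongRay

instance : OrderTopology ClosedLongRay := ⟨rfl⟩

/-- The long ray `𝕃₊`: the closed long ray with its least element removed, with the
subspace topology (an element is non-minimal iff something is below it). -/
def LongRay : Type 1 := {x : ClosedLongRay // ∃ y, y < x}

instance : LinearOrder LongRay :=
  inferInstanceAs (LinearOrder {x : ClosedLongRay // ∃ y, y < x})

instance : TopologicalSpace LongRay :=
  inferInstanceAs (TopologicalSpace {x : ClosedLongRay // ∃ y, y < x})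

/-- The inclusion of the long ray into the closed long ray. -/
def LongRay.toCLR : LongRay → ClosedLongRay := Subtype.val

/-- The long line `𝕃`: an order-reversed copy of `𝕃₊` placed below the closed long ray
`𝕃≥0`, with the order topology. -/
def LongLine : Type 1 := (OrderDual LongRay) ⊕ₗ ClosedLongRay

instance : LinearOrder LongLine :=
  inferInstanceAs (LinearOrder ((OrderDual LongRay) ⊕ₗ ClosedLongRay))

instance : TopologicalSpace LongLine := Preorder.topology LongLine

instance : OrderTopology LongLine := ⟨rfl⟩

/-- The identification of `𝕃₊` with the set of positive elements of `𝕃`. -/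
def LongRay.inL (a : LongRay) : LongLine := toLex (Sum.inr a.toCLR)

/-- The natural order-reversing involution `x ↦ -x` of the long line, exchanging the two
copies of `𝕃₊` and fixing the least element `0` of `𝕃≥0`. -/
noncomputable def LongLine.neg (x : LongLine) : LongLine :=
  match ofLex x with
  | Sum.inl a => toLex (Sum.inr (OrderDual.ofDual a).toCLR)
  | Sum.inr b =>
      @dite _ (∃ y, y < b) (Classical.dec _)
        (fun h => toLex (Sum.inl (OrderDual.toDual (⟨b, h⟩ : LongRay))))
        (fun _ => x)

/-- A subset of the long ray is a *club* if it is closed (in the topology of `𝕃₊`) and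
unbounded (i.e. cofinal). -/
def ClubInLongRay (C : Set LongRay) : Prop :=
  IsClosed C ∧ ∀ β : LongRay, ∃ α ∈ C, β ≤ α

/-- A topological space `X` is *squat* if every continuous map `𝕃₊ → X` is eventually
constant. -/
def Squat (X : Type*) [TopologicalSpace X] : Prop :=
  ∀ f : LongRay → X, Continuous f → ∃ (β : LongRay) (x : X), ∀ α, β ≤ α → f α = x

/-! ### Manifolds and foliations -/

/-- A (topological) `n`-manifold: a nonempty Hausdorff space in which every point has an
open neighbourhood homeomorphic to `ℝⁿ`. -/
def IsTopManifold (M : Type u) [TopologicalSpace M] (n : ℕ) : Prop :=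
  Nonempty M ∧ T2Space M ∧
    ∀ x : M, ∃ U : Set M, x ∈ U ∧ IsOpen U ∧ Nonempty (U ≃ₜ (Fin n → ℝ))

/-- A foliation of dimension `p` and codimension `q` on a space `M`: a family of charts
`φᵢ : Uᵢ ≃ₜ ℝᵖ × ℝ^q` on open sets covering `M` such that all coordinate transformations
have the form `(x, y) ↦ (g (x, y), h y)`, i.e. the last `q` coordinates of the image
depend only on the last `q` coordinates of the argument. -/
structure Foliation (M : Type u) [TopologicalSpace M] (p q : ℕ) where
  /-- index type of the atlas -/
  ι : Type u
  /-- chart domains -/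
  U : ι → Set M
  /-- the charts -/
  chart : (i : ι) → ((U i) ≃ₜ ((Fin p → ℝ) × (Fin q → ℝ)))
  isOpen : ∀ i, IsOpen (U i)
  covers : ∀ x : M, ∃ i, x ∈ U i
  compat : ∀ i j (x y : M) (hxi : x ∈ U i) (hxj : x ∈ U j) (hyi : y ∈ U i) (hyj : y ∈ U j),
    (chart i ⟨x, hxi⟩).2 = (chart i ⟨y, hyi⟩).2 → (chart j ⟨x, hxj⟩).2 = (chart j ⟨y, hyj⟩).2

namespace Foliation

variable {M : Type u} [TopologicalSpace M] {p q : ℕ}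

/-- The set `φᵢ⁻¹ (ℝᵖ × {y})` in the chart domain `Uᵢ`. -/
def plaqueFibre (F : Foliation M p q) (i : F.ι) (y : Fin q → ℝ) : Set M :=
  {w : M | ∃ hw : w ∈ F.U i, (F.chart i ⟨w, hw⟩).2 = y}

/-- A *plaque* of the foliation: a connected component of a set of the form
`φᵢ⁻¹ (ℝᵖ × {y})`. -/
def IsPlaque (F : Foliation M p q) (P : Set M) : Prop :=
  ∃ (i : F.ι) (y : Fin q → ℝ) (z : M), z ∈ F.plaqueFibre i y ∧
    P = connectedComponentIn (F.plaqueFibre i y) z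

/-- Two points lie in a common plaque. -/
def samePlaque (F : Foliation M p q) (x y : M) : Prop :=
  ∃ P, F.IsPlaque P ∧ x ∈ P ∧ y ∈ P

/-- The leaf relation: the smallest equivalence relation relating any two points that lie
in a common plaque. -/
def leafRel (F : Foliation M p q) : M → M → Prop := Relation.EqvGen F.samePlaque

/-- The *leaves* of the foliation: equivalence classes of the leaf relation. -/
def IsLeaf (F : Foliation M p q) (L : Set M) : Prop :=
  ∃ x : M, L = {y | F.leafRel x y}

/-- The *leaf topology* on a leaf (or any subset) `L`: the topology generated by the
plaques contained in `L`. -/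
def leafTopology (F : Foliation M p q) (L : Set M) : TopologicalSpace L :=
  TopologicalSpace.generateFrom
    {s : Set L | ∃ P, F.IsPlaque P ∧ P ⊆ L ∧ s = Subtype.val ⁻¹' P}

/-- A leaf is *long* if it is not metrisable in its leaf topology. -/
def IsLongLeaf (F : Foliation M p q) (L : Set M) : Prop :=
  F.IsLeaf L ∧ ¬ @TopologicalSpace.MetrizableSpace L (F.leafTopology L)

/-- A subset of `M` is *saturated* by the foliation if it is a union of leaves. -/
def Saturated (F : Foliation M p q) (S : Set M) : Prop :=
  ∀ x ∈ S, ∀ y, F.leafRel x y → y ∈ S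

end Foliation

/-!
If `D` is dense and every `{d} × N` with `d ∈ D` is saturated, then in a foliated chart the first
coordinate `M × N → M` is constant along plaques over a dense set of points, hence everywhere, since
`M` is Hausdorff. So every fibre `{x} × N` is saturated. The plaque through a point of such a fibre
is then a continuous injective image of `ℝⁿ` in the `n`-manifold `N`, open by invariance of domain;
leaves inside the fibre are therefore open in it, and as `N` is connected there is only one.

Invariance of domain is obtained from Brouwer's theorem by Kulpa's argument, and Brouwer's theorem
from the Milnor–Rogers proof that a ball does not retract onto its boundary: if a `C¹` map `id + u`
is the identity on the sphere, then `∫ det (1 + t Du)` over the ball is a polynomial in `t` and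
equals the volume of the ball for small `t`, where `id + t u` maps the ball bijectively to itself.
Hence it equals the volume at `t = 1`; but a retraction onto the sphere has singular derivative.
-/

/-! ### Invariance of domain -/

section Analysis

open MeasureTheory Metric
open scoped NNReal

theorem inter_frontier_nonempty_of_isPreconnected {X : Type*} [TopologicalSpace X] {s t : Set X}
    (ht : IsPreconnected t) (hs : (t ∩ s).Nonempty) (hsc : (t ∩ sᶜ).Nonempty) :
    (t ∩ frontier s).Nonempty := by
  by_contra hempty
  have hcover : t ⊆ interior s ∪ interior sᶜ := by
    rw [← compl_frontier_eq_union_interior]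
    exact fun z hz hzs => hempty ⟨z, hz, hzs⟩
  have hs' : (t ∩ interior s).Nonempty :=
    hs.mono fun z hz => ⟨hz.1, (hcover hz.1).resolve_right fun h => interior_subset h hz.2⟩
  have hsc' : (t ∩ interior sᶜ).Nonempty :=
    hsc.mono fun z hz => ⟨hz.1, (hcover hz.1).resolve_left fun h => hz.2 (interior_subset h)⟩
  obtain ⟨z, -, hz, hzc⟩ := ht _ _ isOpen_interior isOpen_interior hcover hs' hsc'
  exact interior_subset hzc (interior_subset hz)

section LipschitzPerturbation

variable {E : Type*} [NormedAddCommGroup E] [NormedSpace ℝ E] {s : Set E} {u : E → E} {K : ℝ≥0}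

theorem lipschitzWith_indicator_of_eqOn_frontier (hu : LipschitzOnWith K u s)
    (hs : IsClosed s) (h0 : EqOn u 0 (frontier s)) : LipschitzWith K (s.indicator u) := by
  have crossing {x y : E} (hx : x ∈ s) (hy : y ∉ s) : edist (u x) 0 ≤ K * edist x y := by
    obtain ⟨z, hz, hzs⟩ := inter_frontier_nonempty_of_isPreconnected
      (convex_segment (𝕜 := ℝ) x y).isPreconnected ⟨x, left_mem_segment ℝ x y, hx⟩
      ⟨y, right_mem_segment ℝ x y, hy⟩
    have hxz : edist x z ≤ edist x y := by
      simpa only [edist_dist] using ENNReal.ofReal_le_ofReal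
        ((le_add_of_nonneg_right dist_nonneg).trans_eq (dist_add_dist_of_mem_segment hz))
    calc edist (u x) 0 = edist (u x) (u z) := by rw [h0 hzs, Pi.zero_apply]
      _ ≤ K * edist x z := hu hx (hs.frontier_subset hzs)
      _ ≤ K * edist x y := by gcongr
  intro x y
  by_cases hx : x ∈ s <;> by_cases hy : y ∈ s
  · simpa only [indicator_of_mem, hx, hy] using hu hx hy
  · simpa only [indicator_of_mem hx, indicator_of_notMem hy] using crossing hx hy
  · simpa only [indicator_of_mem hy, indicator_of_notMem hx, edist_comm] using crossing hy hx
  · simp only [indicator_of_notMem, hx, hy, not_false_eq_true, edist_self, zero_le]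

theorem bijective_id_add_of_lipschitzWith [CompleteSpace E] (hu : LipschitzWith K u) (hK : K < 1) :
    Function.Bijective fun x => x + u x := by
  have happrox : ApproximatesLinearOn (fun x => x + u x)
      (ContinuousLinearEquiv.refl ℝ E : E →L[ℝ] E) univ K := by
    refine lipschitzOnWith_univ.2 ?_ |>.approximatesLinearOn
    convert hu using 1
    ext x
    simp
  have hsmall : Subsingleton E ∨
      K < ‖((ContinuousLinearEquiv.refl ℝ E).symm : E →L[ℝ] E)‖₊⁻¹ := by
    rcases subsingleton_or_nontrivial E with hE | hE
    · exact .inl hE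
    · right; simpa using hK
  exact ⟨injOn_univ.1 (happrox.injOn hsmall), happrox.surjective hsmall⟩

theorem bijOn_id_add_of_lipschitzOnWith [CompleteSpace E] (hu : LipschitzOnWith K u s) (hK : K < 1)
    (hs : IsClosed s) (h0 : EqOn u 0 (frontier s)) : BijOn (fun x => x + u x) s s := by
  have hbij : Function.Bijective fun x => x + s.indicator u x :=
    bijective_id_add_of_lipschitzWith (lipschitzWith_indicator_of_eqOn_frontier hu hs h0) hK
  have hfix : BijOn (fun x => x + s.indicator u x) sᶜ sᶜ :=
    (bijOn_id sᶜ).congr fun x hx => by simp [indicator_of_notMem hx]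
  have := hfix.compl hbij
  rw [compl_compl] at this
  exact this.congr fun x hx => by simp only [indicator_of_mem hx]

end LipschitzPerturbation

section DetPolynomial

open Polynomial

theorem exists_polynomial_eval_eq_det_one_add_smul {R V : Type*} [CommRing R] [Nontrivial R]
    [AddCommGroup V] [Module R V] [Module.Free R V] [Module.Finite R V] (A : V →ₗ[R] V) :
    ∃ P : R[X], P.natDegree ≤ Module.finrank R V ∧ ∀ t, P.eval t = LinearMap.det (1 + t • A) := by
  let b := Module.Free.chooseBasis R V
  let B := LinearMap.toMatrix b b A
  refine ⟨((X : R[X]) • B.map C + (1 : Matrix _ _ R).map C).det, ?_, fun t => ?_⟩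
  · rw [Module.finrank_eq_card_basis b]
    exact natDegree_det_X_add_C_le B 1
  · have : LinearMap.toMatrix b b (1 + t • A) = t • B + 1 := by
      rw [map_add, map_smul, LinearMap.toMatrix_one b, add_comm]
    rw [← LinearMap.det_toMatrix b, this, ← coe_evalRingHom t, RingHom.map_det]
    congr 1
    ext i j
    simp only [coe_evalRingHom, RingHom.mapMatrix_apply, Matrix.map_apply, Matrix.add_apply,
      Matrix.smul_apply, smul_eq_mul, eval_add, eval_mul, eval_X, eval_C]

theorem exists_weights_det_one_add_eq_sum {k V : Type*} [Field k] [AddCommGroup V]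
    [Module k V] [FiniteDimensional k V] {T : Finset k} (hT : Module.finrank k V < T.card) :
    ∃ w : k → k, ∑ t ∈ T, w t = 1 ∧
      ∀ A : V →ₗ[k] V, LinearMap.det (1 + A) = ∑ t ∈ T, w t * LinearMap.det (1 + t • A) := by
  classical
  refine ⟨fun t => (Lagrange.basis T id t).eval 1, ?_, fun A => ?_⟩
  · rw [← eval_finsetSum, Lagrange.sum_basis (injOn_id _) (Finset.card_pos.1 (by omega)), eval_one]
  · obtain ⟨P, hdeg, hP⟩ := exists_polynomial_eval_eq_det_one_add_smul A
    have hPT : P.degree < T.card :=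
      degree_le_natDegree.trans_lt (mod_cast hdeg.trans_lt hT)
    calc LinearMap.det (1 + A) = P.eval 1 := by rw [hP, one_smul]
      _ = ∑ t ∈ T, (Lagrange.basis T id t).eval 1 * P.eval t := by
        conv_lhs => rw [Lagrange.eq_interpolate (v := id) (injOn_id _) hPT]
        simp only [Lagrange.interpolate_apply, eval_finsetSum, eval_mul, eval_C, id, mul_comm]
      _ = _ := by simp only [hP]

end DetPolynomial

section DetIntegral

variable {E : Type*} [NormedAddCommGroup E] [NormedSpace ℝ E] {s : Set E} {u : E → E}

theorem eventually_forall_det_one_add_smul_fderiv_pos (hs : IsCompact s) (hu : ContDiff ℝ 1 u) :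
    ∀ᶠ t : ℝ in 𝓝 0, ∀ x ∈ s, 0 < (1 + t • fderiv ℝ u x).det := by
  refine hs.eventually_forall_of_forall_eventually fun x _ => ?_
  have hcont : Continuous fun z : ℝ × E => (1 + z.1 • fderiv ℝ u z.2).det :=
    ContinuousLinearMap.continuous_det.comp <| continuous_const.add <|
      continuous_fst.smul ((hu.continuous_fderiv one_ne_zero).comp continuous_snd)
  refine hcont.continuousAt.eventually (lt_mem_nhds ?_)
  simp [ContinuousLinearMap.det]

variable [FiniteDimensional ℝ E] [MeasurableSpace E] [BorelSpace E] (μ : Measure E)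
  [μ.IsAddHaarMeasure]

theorem eventually_setIntegral_det_one_add_smul_fderiv (hs : IsCompact s) (hconv : Convex ℝ s)
    (hu : ContDiff ℝ 1 u) (h0 : EqOn u 0 (frontier s)) :
    ∀ᶠ t : ℝ in 𝓝 0, ∫ x in s, (1 + t • fderiv ℝ u x).det ∂μ = μ.real s := by
  obtain ⟨K, hK⟩ := hu.contDiffOn.exists_lipschitzOnWith one_ne_zero hconv hs
  have hsmall : ∀ᶠ t : ℝ in 𝓝 0, ‖t‖₊ * K < 1 :=
    (continuous_nnnorm.mul continuous_const).continuousAt.eventually (gt_mem_nhds (by simp))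
  filter_upwards [eventually_forall_det_one_add_smul_fderiv_pos hs hu, hsmall] with t hpos htK
  have hbij : BijOn (fun x => x + t • u x) s s :=
    bijOn_id_add_of_lipschitzOnWith ((lipschitzWith_smul t).comp_lipschitzOnWith hK) htK hs.isClosed
      fun x hx => by simp [h0 hx]
  have hderiv : ∀ x ∈ s, HasFDerivWithinAt (fun x => x + t • u x) (1 + t • fderiv ℝ u x) s x :=
    fun x _ => ((hasFDerivAt_id x).add
      ((hu.differentiable one_ne_zero x).hasFDerivAt.const_smul t)).hasFDerivWithinAt
  calc ∫ x in s, (1 + t • fderiv ℝ u x).det ∂μ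
      = ∫ x in s, |(1 + t • fderiv ℝ u x).det| • (1 : ℝ) ∂μ :=
        setIntegral_congr_fun hs.measurableSet fun x hx => by
          simp only [abs_of_pos (hpos x hx), smul_eq_mul, mul_one]
    _ = ∫ _ in (fun x => x + t • u x) '' s, (1 : ℝ) ∂μ :=
        (integral_image_eq_integral_abs_det_fderiv_smul μ hs.measurableSet hderiv hbij.injOn
          fun _ => 1).symm
    _ = μ.real s := by rw [hbij.image_eq, setIntegral_const, smul_eq_mul, mul_one]

theorem setIntegral_det_one_add_fderiv (hs : IsCompact s) (hconv : Convex ℝ s)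
    (hu : ContDiff ℝ 1 u) (h0 : EqOn u 0 (frontier s)) :
    ∫ x in s, (1 + fderiv ℝ u x).det ∂μ = μ.real s := by
  obtain ⟨T, hTμ, hT⟩ := (infinite_of_mem_nhds (0 : ℝ)
    (eventually_setIntegral_det_one_add_smul_fderiv μ hs hconv hu h0)).exists_subset_card_eq
      (Module.finrank ℝ E + 1)
  obtain ⟨w, hw, hdet⟩ := exists_weights_det_one_add_eq_sum (V := E)
    (hT ▸ Nat.lt_succ_self _ : Module.finrank ℝ E < T.card)
  have hint (t : ℝ) : IntegrableOn (fun x => (1 + t • fderiv ℝ u x).det) s μ :=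
    (ContinuousLinearMap.continuous_det.comp <| continuous_const.add <|
      (hu.continuous_fderiv one_ne_zero).const_smul t).continuousOn.integrableOn_compact hs
  calc ∫ x in s, (1 + fderiv ℝ u x).det ∂μ
      = ∫ x in s, ∑ t ∈ T, w t * (1 + t • fderiv ℝ u x).det ∂μ := by
        congr with x; exact hdet (fderiv ℝ u x)
    _ = ∑ t ∈ T, w t * ∫ x in s, (1 + t • fderiv ℝ u x).det ∂μ := by
        rw [integral_finsetSum _ fun t _ => (hint t).const_mul (w t)]
        simp only [integral_const_mul]
    _ = ∑ t ∈ T, w t * μ.real s := Finset.sum_congr rfl fun t ht => by rw [hTμ ht]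
    _ = μ.real s := by rw [← Finset.sum_mul, hw, one_mul]

end DetIntegral

section NoRetraction

variable {E : Type*} [NormedAddCommGroup E] [InnerProductSpace ℝ E] [FiniteDimensional ℝ E]
  {R : ℝ}

theorem det_fderiv_eq_zero_of_norm_eq_const {r : E → E} (hR : R ≠ 0) (hnorm : ∀ x, ‖r x‖ = R)
    {x : E} (hr : DifferentiableAt ℝ r x) : (fderiv ℝ r x).det = 0 := by
  by_contra hdet
  have horth (v : E) : inner ℝ (r x) (fderiv ℝ r x v) = 0 := by
    have hconst : HasFDerivAt (fun y => ‖r y‖ ^ 2) (0 : E →L[ℝ] ℝ) x := by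
      simpa only [hnorm] using hasFDerivAt_const (R ^ 2) x
    simpa using DFunLike.congr_fun (hr.hasFDerivAt.norm_sq.unique hconst) v
  obtain ⟨v, hv⟩ : ∃ v, fderiv ℝ r x v = r x :=
    ((fderiv ℝ r x).toContinuousLinearEquivOfDetNeZero hdet).surjective (r x)
  have hzero : r x = 0 := inner_self_eq_zero.1 (hv ▸ horth v)
  exact hR (by rw [← hnorm x, hzero, norm_zero])

theorem not_forall_norm_eq_of_eqOn_sphere {r : E → E} (hr : ContDiff ℝ 1 r) (hR : 0 < R)
    (hid : EqOn r id (sphere 0 R)) : ¬ ∀ x, ‖r x‖ = R := by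
  intro hnorm
  borelize E
  have hfderiv (x : E) : 1 + fderiv ℝ (fun y => r y - y) x = fderiv ℝ r x := by
    rw [fderiv_fun_sub (hr.differentiable one_ne_zero x) differentiableAt_fun_id, fderiv_fun_id]
    exact add_sub_cancel _ _
  have hvol := setIntegral_det_one_add_fderiv Measure.addHaar
    (isCompact_closedBall 0 R) (convex_closedBall 0 R) (hr.sub contDiff_id) fun x hx => by
      rw [frontier_closedBall 0 hR.ne'] at hx; simp [hid hx]
  have hzero (x : E) : (fderiv ℝ r x).det = 0 :=
    det_fderiv_eq_zero_of_norm_eq_const hR.ne' hnorm (hr.differentiable one_ne_zero x)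
  have hpos : 0 < Measure.addHaar.real (closedBall (0 : E) R) :=
    ENNReal.toReal_pos (measure_closedBall_pos _ _ hR).ne' measure_closedBall_lt_top.ne
  simp only [id, hfderiv, hzero, integral_zero] at hvol
  exact hpos.ne hvol

theorem exists_eq_zero_of_eq_self_outside_ball {q : E → E} (hq : Continuous q)
    (hid : ∀ x, R ≤ ‖x‖ → q x = x) : ∃ x, q x = 0 := by
  by_contra! hne
  set R' := max R 0 + 1
  have hR'pos : 0 < R' := by positivity
  have hnhds : {x : E | max R 0 < ‖x‖} ∈ 𝓝ˢ {x : E | R' ≤ ‖x‖} :=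
    (isOpen_lt continuous_const continuous_norm).mem_nhdsSet.2
      fun x (hx : R' ≤ ‖x‖) => (lt_add_one (max R 0)).trans_le hx
  obtain ⟨p, hp, hpq, hpid, -⟩ := hq.exists_contDiff_approx_and_eqOn 1 hq.norm
    (fun x => norm_pos_iff.2 (hne x)) (isClosed_le continuous_const continuous_norm) hnhds
    (contDiffOn_id.congr fun x (hx : max R 0 < ‖x‖) => hid x ((le_max_left R 0).trans hx.le))
  have hpne (x : E) : p x ≠ 0 := fun h => by simpa [h] using hpq x
  refine not_forall_norm_eq_of_eqOn_sphere (r := fun x => (R' / ‖p x‖) • p x)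
    ((contDiff_const.div (hp.norm ℝ hpne) fun x => norm_ne_zero_iff.2 (hpne x)).smul hp) hR'pos
    (fun x hx => ?_) fun x => ?_
  · have hxR : ‖x‖ = R' := mem_sphere_zero_iff_norm.1 hx
    have hpx : p x = x :=
      (hpid hxR.ge).trans (hid x (by linarith [le_max_left R 0]))
    simp [hpx, hxR, hR'pos.ne']
  · rw [norm_smul, Real.norm_of_nonneg (by positivity),
      div_mul_cancel₀ _ (norm_ne_zero_iff.2 (hpne x))]

theorem exists_isFixedPt_of_mapsTo_closedBall {g : E → E} (hg : ContinuousOn g (closedBall 0 1))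
    (hmaps : MapsTo g (closedBall 0 1) (closedBall 0 1)) :
    ∃ x ∈ closedBall (0 : E) 1, Function.IsFixedPt g x := by
  obtain ⟨G, hG1, hGg⟩ := ContinuousMap.exists_forall_mem_restrict_eq isClosed_closedBall
    ⟨(closedBall 0 1).domRestrict g, continuousOn_iff_continuous_domRestrict.1 hg⟩
    fun x => hmaps x.2
  let cutoff (x : E) : ℝ := max 0 (min 1 (2 - ‖x‖))
  have hcutoff_le (x : E) : cutoff x ≤ 1 := max_le zero_le_one (min_le_left _ _)
  have hcutoff (x : E) : ‖cutoff x • G x‖ ≤ 1 := by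
    rw [norm_smul, Real.norm_of_nonneg (le_max_left _ _)]
    exact mul_le_one₀ (hcutoff_le x) (norm_nonneg _) (mem_closedBall_zero_iff.1 (hG1 x))
  obtain ⟨x, hx⟩ := exists_eq_zero_of_eq_self_outside_ball (R := 2)
    (q := fun x => x - cutoff x • G x) (by fun_prop) fun x hx => by
      have : cutoff x = 0 := max_eq_left ((min_le_right _ _).trans (by linarith))
      simp only [this, zero_smul, sub_zero]
  rw [sub_eq_zero] at hx
  have hxball : ‖x‖ ≤ 1 := hx ▸ hcutoff x
  have hxone : cutoff x = 1 := by
    simp only [cutoff]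
    rw [min_eq_left (by linarith), max_eq_right zero_le_one]
  have hGx : G x = g x := DFunLike.congr_fun hGg ⟨x, mem_closedBall_zero_iff.2 hxball⟩
  exact ⟨x, mem_closedBall_zero_iff.2 hxball, by rw [hxone, one_smul, hGx] at hx; exact hx.symm⟩

theorem exists_eq_zero_of_norm_sub_le {p : E → E} (hp : ContinuousOn p (closedBall 0 1))
    (hnear : ∀ x ∈ closedBall (0 : E) 1, ‖p x - x‖ ≤ 1) : ∃ x ∈ closedBall (0 : E) 1, p x = 0 := by
  obtain ⟨x, hx, hfix⟩ := exists_isFixedPt_of_mapsTo_closedBall (continuousOn_id.sub hp)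
    fun x hx => mem_closedBall_zero_iff.2 (norm_sub_rev (p x) x ▸ hnear x hx)
  exact ⟨x, hx, sub_eq_self.1 hfix⟩

end NoRetraction

theorem exists_continuous_leftInvOn.{v, w} {X : Type v} {Y : Type w} [TopologicalSpace X]
    [TopologicalSpace Y] [T2Space Y] [NormalSpace Y] [TietzeExtension.{w, v} X] {f : X → Y}
    {s : Set X} (hs : IsCompact s) (hf : ContinuousOn f s) (hinj : InjOn f s) :
    ∃ G : C(Y, X), LeftInvOn G f s := by
  have : CompactSpace s := isCompact_iff_compactSpace.1 hs
  obtain ⟨G, hG⟩ := ContinuousMap.exists_extension'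
    ((continuousOn_iff_continuous_domRestrict.1 hf).isClosedEmbedding hinj.injective)
    ⟨((↑) : s → X), continuous_subtype_val⟩
  exact ⟨G, fun x hx => congr_fun hG ⟨x, hx⟩⟩

section PerturbationAndPushOut

variable {E : Type*} [NormedAddCommGroup E] [NormedSpace ℝ E]

theorem exists_continuous_norm_sub_le_ne_zero [FiniteDimensional ℝ E] [MeasurableSpace E]
    [BorelSpace E] (μ : Measure E) [μ.IsAddHaarMeasure] {G : E → E} (hG : Continuous G)
    {K Z : Set E} (hK : IsCompact K) (hGK : ∀ y ∈ K, G y ≠ 0) (hZ : μ Z = 0) {η : ℝ} (hη : 0 < η) :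
    ∃ Q : E → E, Continuous Q ∧ (∀ y, ‖Q y - G y‖ ≤ η) ∧ ∀ y ∈ K ∪ Z, Q y ≠ 0 := by
  obtain ⟨δ, hδ, hGδ⟩ := hK.exists_forall_le' hG.norm.continuousOn
    fun y hy => norm_pos_iff.2 (hGK y hy)
  set ρ := min (δ / 3) (η / 2)
  have hρ : 0 < ρ := by positivity
  obtain ⟨P, hP, hPG, -⟩ := hG.exists_contDiff_approx 1 (ε := fun _ => ρ) continuous_const
    fun _ => hρ
  have hnull : μ (P '' Z) = 0 := addHaar_image_eq_zero_of_differentiableOn_of_addHaar_eq_zero μ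
    (hP.differentiable one_ne_zero).differentiableOn hZ
  -- A `C¹` map sends null sets to null sets, so `P` has arbitrarily small translates
  -- without zeros on `Z`.
  obtain ⟨w, hwP, hw⟩ : ∃ w ∈ (P '' Z)ᶜ, dist 0 w < ρ :=
    (Measure.dense_of_ae (measure_eq_zero_iff_ae_notMem.1 hnull)).exists_dist_lt 0 hρ
  have hnear (y : E) : ‖P y - w - G y‖ ≤ 2 * ρ := by
    rw [sub_right_comm, two_mul]
    rw [dist_zero_left] at hw
    exact (norm_sub_le _ _).trans (add_le_add (dist_eq_norm (P y) (G y) ▸ hPG y).le hw.le)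
  refine ⟨fun y => P y - w, hP.continuous.sub continuous_const, fun y => ?_, ?_⟩
  · linarith [hnear y, min_le_right (δ / 3) (η / 2)]
  · rintro y (hy | hy) hzero
    · have := hnear y
      rw [show P y - w = 0 from hzero, zero_sub, norm_neg] at this
      linarith [hGδ y hy, min_le_left (δ / 3) (η / 2)]
    · exact hwP ⟨y, hy, sub_eq_zero.1 hzero⟩

/-- The radial map about `c` that pushes the punctured ball of radius `ε` onto its boundary sphere
and fixes every point outside the ball. -/
def pushOut (c : E) (ε : ℝ) (y : E) : E := c + max (ε / ‖y - c‖) 1 • (y - c)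

variable {c y : E} {ε : ℝ}

theorem pushOut_of_le_dist (h : ε ≤ dist y c) : pushOut c ε y = y := by
  rw [dist_eq_norm] at h
  rw [pushOut, max_eq_right (div_le_one_of_le₀ h (norm_nonneg _)), one_smul, add_sub_cancel]

theorem dist_pushOut_of_dist_le (hy : y ≠ c) (h : dist y c ≤ ε) : dist (pushOut c ε y) c = ε := by
  have hpos : 0 < ‖y - c‖ := norm_pos_iff.2 (sub_ne_zero.2 hy)
  rw [dist_eq_norm] at h ⊢
  rw [pushOut, add_sub_cancel_left, max_eq_left ((one_le_div hpos).2 h), norm_smul,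
    Real.norm_of_nonneg (div_nonneg (hpos.le.trans h) hpos.le), div_mul_cancel₀ _ hpos.ne']

theorem continuousOn_pushOut : ContinuousOn (pushOut c ε) {c}ᶜ := by
  have hsub : Continuous fun y : E => y - c := by fun_prop
  exact continuousOn_const.add <| ((continuousOn_const.div hsub.norm.continuousOn fun y hy =>
    norm_ne_zero_iff.2 (sub_ne_zero.2 hy)).sup continuousOn_const).smul hsub.continuousOn

end PerturbationAndPushOut

theorem mem_image_closedBall_of_leftInvOn {E : Type*} [NormedAddCommGroup E]
    [InnerProductSpace ℝ E] [FiniteDimensional ℝ E] {f G : E → E}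
    (hf : ContinuousOn f (closedBall 0 1)) (hG : Continuous G)
    (hinv : LeftInvOn G f (closedBall 0 1)) {c : E} {ε : ℝ}
    (hc : f 0 ∈ ball c ε) (hGc : ∀ y ∈ closedBall c ε, ‖G y‖ ≤ 1 / 4) :
    c ∈ f '' closedBall 0 1 := by
  -- If `f` omits `c`, its image can be pushed off the ball about `c` into a set on which some
  -- small perturbation `Q` of `G` has no zero; then `Q ∘ pushOut c ε ∘ f` is zero-free but, being
  -- close to the identity, has a zero.
  by_contra hcf
  borelize E
  have hε : ε ≠ 0 := (dist_nonneg.trans_lt hc).ne'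
  have hne : ∀ y ∈ f '' closedBall 0 1 \ ball c ε, G y ≠ 0 := by
    rintro _ ⟨⟨x, hx, rfl⟩, hxc⟩ hzero
    rw [hinv hx] at hzero
    exact hxc (hzero ▸ hc)
  obtain ⟨Q, hQ, hQG, hQne⟩ := exists_continuous_norm_sub_le_ne_zero Measure.addHaar hG
    (((isCompact_closedBall 0 1).image_of_continuousOn hf).diff isOpen_ball) hne
    (Measure.addHaar_sphere_of_ne_zero _ c hε) one_half_pos
  have hfc : MapsTo f (closedBall 0 1) {c}ᶜ := fun x hx hxc => hcf ⟨x, hx, hxc⟩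
  have hnear : ∀ x ∈ closedBall (0 : E) 1, ‖Q (pushOut c ε (f x)) - x‖ ≤ 1 := by
    intro x hx
    suffices ‖G (pushOut c ε (f x)) - x‖ ≤ 1 / 2 by
      linarith [hQG (pushOut c ε (f x)), norm_sub_le_norm_sub_add_norm_sub
        (Q (pushOut c ε (f x))) (G (pushOut c ε (f x))) x]
    rcases le_total ε (dist (f x) c) with hxc | hxc
    · rw [pushOut_of_le_dist hxc, hinv hx, sub_self, norm_zero]
      exact one_half_pos.le
    · have hGx := hGc _ (dist_pushOut_of_dist_le (hfc hx) hxc).le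
      have hx' := hGc _ hxc
      rw [hinv hx] at hx'
      linarith [norm_sub_le (G (pushOut c ε (f x))) x]
  obtain ⟨x, hx, hzero⟩ := exists_eq_zero_of_norm_sub_le
    (hQ.comp_continuousOn (continuousOn_pushOut.comp hf hfc)) hnear
  refine hQne (pushOut c ε (f x)) ?_ hzero
  rcases le_or_gt ε (dist (f x) c) with hxc | hxc
  · rw [pushOut_of_le_dist hxc]
    exact .inl ⟨mem_image_of_mem f hx, hxc.not_gt⟩
  · exact .inr (dist_pushOut_of_dist_le (hfc hx) hxc.le)

theorem image_closedBall_mem_nhds.{w} {E : Type w} [NormedAddCommGroup E] [InnerProductSpace ℝ E]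
    [FiniteDimensional ℝ E] {f : E → E} (hf : ContinuousOn f (closedBall 0 1))
    (hinj : InjOn f (closedBall 0 1)) : f '' closedBall 0 1 ∈ 𝓝 (f 0) := by
  have : TietzeExtension.{w, w} E := .of_tvs ℝ
  obtain ⟨G, hinv⟩ := exists_continuous_leftInvOn (isCompact_closedBall 0 1) hf hinj
  have hG0 : G (f 0) = 0 := hinv (mem_closedBall_self zero_le_one)
  have hsmall : ∀ᶠ y in 𝓝 (f 0), ‖G y‖ < 1 / 4 :=
    G.continuous.norm.continuousAt.eventually (gt_mem_nhds (by simp [hG0]))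
  obtain ⟨ρ, hρ, hGρ⟩ := Metric.eventually_nhds_iff.1 hsmall
  filter_upwards [ball_mem_nhds (f 0) (half_pos hρ)] with c hc
  refine mem_image_closedBall_of_leftInvOn hf G.continuous hinv (mem_ball_comm.1 hc)
    fun y hy => (hGρ ?_).le
  linarith [dist_triangle y c (f 0), mem_ball.1 hc, mem_closedBall.1 hy]

theorem image_mem_nhds_of_continuousOn_of_injOn {E : Type*} [NormedAddCommGroup E]
    [NormedSpace ℝ E] [FiniteDimensional ℝ E] {f : E → E} {s : Set E} {x : E} (hs : s ∈ 𝓝 x)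
    (hf : ContinuousOn f s) (hinj : InjOn f s) : f '' s ∈ 𝓝 (f x) := by
  let e : E ≃L[ℝ] EuclideanSpace ℝ (Fin (Module.finrank ℝ E)) := toEuclidean
  let h (r : ℝ) (z : EuclideanSpace ℝ (Fin (Module.finrank ℝ E))) : E := x + e.symm (r • z)
  have hcont (r : ℝ) : Continuous (h r) := by fun_prop
  obtain ⟨r, hr, hrs⟩ : ∃ r > 0, MapsTo (h r) (closedBall 0 1) s := by
    have hs' : h 1 ⁻¹' s ∈ 𝓝 0 := (hcont 1).continuousAt (by simpa [h] using hs)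
    obtain ⟨r, hr, hrs⟩ := nhds_basis_closedBall.mem_iff.1 hs'
    refine ⟨r, hr, fun z hz => ?_⟩
    have hrz : r • z ∈ closedBall 0 r := by
      rw [mem_closedBall_zero_iff, norm_smul, Real.norm_of_nonneg hr.le]
      exact mul_le_of_le_one_right hr.le (mem_closedBall_zero_iff.1 hz)
    simpa only [h, mem_preimage, one_smul] using hrs hrz
  have hhinj : Function.Injective (h r) := fun z w hzw =>
    smul_right_injective _ hr.ne' (e.symm.injective (add_left_cancel hzw))
  have himage := image_closedBall_mem_nhds (f := e ∘ f ∘ h r)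
    (e.continuous.comp_continuousOn (hf.comp (hcont r).continuousOn hrs))
    (e.injective.comp_injOn (hinj.comp hhinj.injOn hrs))
  have hfx : f (h r 0) = f x := by simp [h]
  have hpre : e ⁻¹' (e ∘ f ∘ h r '' closedBall 0 1) ∈ 𝓝 (f x) :=
    e.continuous.continuousAt (hfx ▸ himage)
  refine mem_of_superset hpre ?_
  rintro y ⟨z, hz, hzy⟩
  exact ⟨h r z, hrs hz, e.injective hzy⟩

theorem isOpenMap_of_continuous_of_injective (E : Type*) {X Y : Type*} [NormedAddCommGroup E]
    [NormedSpace ℝ E] [FiniteDimensional ℝ E] [TopologicalSpace X] [TopologicalSpace Y]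
    [ChartedSpace E X] [ChartedSpace E Y] {f : X → Y} (hf : Continuous f)
    (hinj : Function.Injective f) : IsOpenMap f := by
  refine isOpenMap_iff_nhds_le.2 fun x => le_map fun s hs => ?_
  let φ := chartAt E x
  let ψ := chartAt E (f x)
  have hx : x ∈ φ.source := mem_chart_source E x
  let t := φ.target ∩ φ.symm ⁻¹' (s ∩ f ⁻¹' ψ.source)
  have ht : t ∈ 𝓝 (φ x) := by
    refine inter_mem (φ.open_target.mem_nhds (φ.map_source hx))
      ((φ.continuousAt_symm (φ.map_source hx)).preimage_mem_nhds ?_)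
    rw [φ.left_inv hx]
    exact inter_mem hs (hf.continuousAt (chart_source_mem_nhds E (f x)))
  have himage : ψ ∘ f ∘ φ.symm '' t ∈ 𝓝 (ψ (f x)) := by
    have := image_mem_nhds_of_continuousOn_of_injOn (f := ψ ∘ f ∘ φ.symm) ht
      (ψ.continuousOn.comp (hf.comp_continuousOn (φ.continuousOn_symm.mono inter_subset_left))
        fun y hy => hy.2.2)
      (ψ.injOn.comp (hinj.injOn.comp (φ.symm.injOn.mono inter_subset_left) (mapsTo_univ _ _))
        fun y hy => hy.2.2)
    simpa only [Function.comp_apply, φ.left_inv hx] using this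
  filter_upwards [chart_source_mem_nhds E (f x),
    (ψ.continuousAt (mem_chart_source E (f x))).preimage_mem_nhds himage]
  rintro y hy ⟨z, hz, hzy⟩
  exact ⟨φ.symm z, hz.2.1, ψ.injOn hz.2.2 hy hzy⟩

end Analysis

/-! ### Saturated sets and leaves -/

theorem IsTopManifold.nonempty_chartedSpace {M : Type u} [TopologicalSpace M] {n : ℕ}
    (hM : IsTopManifold M n) : Nonempty (ChartedSpace (Fin n → ℝ) M) := by
  have hchart (x : M) : ∃ j : (Fin n → ℝ) → M, IsOpenEmbedding j ∧ x ∈ range j := by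
    obtain ⟨U, hxU, hU, ⟨φ⟩⟩ := hM.2.2 x
    exact ⟨_, hU.isOpenEmbedding_subtypeVal.comp φ.symm.isOpenEmbedding, φ ⟨x, hxU⟩, by simp⟩
  choose j hj hmem using hchart
  let φ (x : M) := ((hj x).toOpenPartialHomeomorph (j x)).symm
  exact ⟨{ atlas := range φ
           chartAt := φ
           mem_chart_source := fun x => by simpa [φ] using hmem x
           chart_mem_atlas := mem_range_self }⟩

namespace Foliation

variable {X : Type u} [TopologicalSpace X] {p q : ℕ} (F : Foliation X p q) {S : Set X} {x y : X}

/-- The inverse of the `i`-th chart, as a map into the whole space. -/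
def param (i : F.ι) (z : (Fin p → ℝ) × (Fin q → ℝ)) : X := (F.chart i).symm z

theorem isOpenEmbedding_param (i : F.ι) : IsOpenEmbedding (F.param i) :=
  (F.isOpen i).isOpenEmbedding_subtypeVal.comp (F.chart i).symm.isOpenEmbedding

theorem exists_param_eq (x : X) : ∃ i z, F.param i z = x := by
  obtain ⟨i, hi⟩ := F.covers x
  exact ⟨i, F.chart i ⟨x, hi⟩, by simp [param]⟩

theorem plaqueFibre_eq_range (i : F.ι) (c : Fin q → ℝ) :
    F.plaqueFibre i c = range fun a => F.param i (a, c) := by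
  ext w
  constructor
  · rintro ⟨hw, rfl⟩
    exact ⟨(F.chart i ⟨w, hw⟩).1, by simp [param]⟩
  · rintro ⟨a, rfl⟩
    exact ⟨((F.chart i).symm (a, c)).2, by simp [param]⟩

theorem isPreconnected_plaqueFibre (i : F.ι) (c : Fin q → ℝ) :
    IsPreconnected (F.plaqueFibre i c) := by
  rw [plaqueFibre_eq_range]
  exact isPreconnected_range ((F.isOpenEmbedding_param i).continuous.comp (by fun_prop))

variable {F}

theorem samePlaque_iff_exists_param : F.samePlaque x y ↔
    ∃ i a b c, F.param i (a, c) = x ∧ F.param i (b, c) = y := by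
  constructor
  · rintro ⟨_, ⟨i, c, z, -, rfl⟩, hx, hy⟩
    obtain ⟨a, hxa⟩ := (F.plaqueFibre_eq_range i c).subset (connectedComponentIn_subset _ _ hx)
    obtain ⟨b, hyb⟩ := (F.plaqueFibre_eq_range i c).subset (connectedComponentIn_subset _ _ hy)
    exact ⟨i, a, b, c, hxa, hyb⟩
  · rintro ⟨i, a, b, c, rfl, rfl⟩
    have hmem (a : Fin p → ℝ) : F.param i (a, c) ∈ F.plaqueFibre i c :=
      F.plaqueFibre_eq_range i c ▸ mem_range_self a
    refine ⟨_, ⟨i, c, _, hmem a, rfl⟩, mem_connectedComponentIn (hmem a), ?_⟩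
    rw [(F.isPreconnected_plaqueFibre i c).connectedComponentIn (hmem a)]
    exact hmem b

theorem leafRel_param (i : F.ι) (a b : Fin p → ℝ) (c : Fin q → ℝ) :
    F.leafRel (F.param i (a, c)) (F.param i (b, c)) :=
  .rel _ _ (samePlaque_iff_exists_param.2 ⟨i, a, b, c, rfl, rfl⟩)

theorem saturated_of_forall_param
    (h : ∀ i a b c, F.param i (a, c) ∈ S → F.param i (b, c) ∈ S) : F.Saturated S := by
  have hiff (x y : X) (hxy : F.leafRel x y) : x ∈ S ↔ y ∈ S := by
    induction hxy with
    | rel x y hxy =>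
      obtain ⟨i, a, b, c, rfl, rfl⟩ := samePlaque_iff_exists_param.1 hxy
      exact ⟨h i a b c, h i b a c⟩
    | refl x => rfl
    | symm x y _ ih => exact ih.symm
    | trans x y z _ _ ihxy ihyz => exact ihxy.trans ihyz
  exact fun x hx y hxy => (hiff x y hxy).1 hx

theorem IsLeaf.saturated (hS : F.IsLeaf S) : F.Saturated S := by
  obtain ⟨x, rfl⟩ := hS
  exact fun y hxy z hyz => .trans _ _ _ hxy hyz

theorem isLeaf_of_saturated (hne : S.Nonempty) (hS : F.Saturated S)
    (hrel : ∀ x ∈ S, ∀ y ∈ S, F.leafRel x y) : F.IsLeaf S := by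
  obtain ⟨x, hx⟩ := hne
  exact ⟨x, Subset.antisymm (hrel x hx) (hS x hx)⟩

theorem saturated_fiber_of_dense {Y : Type*} [TopologicalSpace Y] [T2Space Y] {f : X → Y}
    (hf : Continuous f) (hfo : IsOpenMap f) {D : Set Y} (hD : Dense D)
    (hsat : ∀ d ∈ D, F.Saturated (f ⁻¹' {d})) (y : Y) : F.Saturated (f ⁻¹' {y}) := by
  refine saturated_of_forall_param fun i a b c ha => ?_
  have hparam := F.isOpenEmbedding_param i
  have hconst : (fun z => f (F.param i z)) = fun z => f (F.param i (b, z.2)) :=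
    (hf.comp hparam.continuous).ext_on (hD.preimage (hfo.comp hparam.isOpenMap))
      ((hf.comp hparam.continuous).comp (by fun_prop)) fun z hz =>
        (hsat _ hz _ rfl _ (leafRel_param i z.1 b z.2)).symm
  exact (congr_fun hconst (a, c)).symm.trans ha

theorem eventually_leafRel_of_isEmbedding {N : Type*} [TopologicalSpace N]
    [ChartedSpace (Fin p → ℝ) N] {g : N → X} (hg : IsEmbedding g)
    (hsat : F.Saturated (range g)) (y : N) : ∀ᶠ z in 𝓝 y, F.leafRel (g y) (g z) := by
  obtain ⟨i, ⟨a, c⟩, hac⟩ := F.exists_param_eq (g y)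
  have hlift (v : Fin p → ℝ) : ∃ z, g z = F.param i (v, c) :=
    hsat _ (mem_range_self y) _ (hac ▸ leafRel_param i a v c)
  choose k hk using hlift
  have hparam := F.isOpenEmbedding_param i
  have hkcont : Continuous k := by
    rw [hg.continuous_iff, show g ∘ k = fun v => F.param i (v, c) from funext hk]
    exact hparam.continuous.comp (by fun_prop)
  have hkinj : Function.Injective k := fun v w hvw =>
    congrArg Prod.fst (hparam.injective ((hk v).symm.trans ((congrArg g hvw).trans (hk w))))
  have hka : k a = y := hg.injective ((hk a).trans hac)
  have hrange : range k ∈ 𝓝 y :=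
    (isOpenMap_of_continuous_of_injective (Fin p → ℝ) hkcont hkinj).isOpen_range.mem_nhds
      ⟨a, hka⟩
  filter_upwards [hrange]
  rintro _ ⟨v, rfl⟩
  rw [hk, ← hac]
  exact leafRel_param i a v c

theorem isLeaf_range_of_isEmbedding {N : Type*} [TopologicalSpace N] [ChartedSpace (Fin p → ℝ) N]
    [ConnectedSpace N] {g : N → X} (hg : IsEmbedding g) (hsat : F.Saturated (range g)) :
    F.IsLeaf (range g) := by
  refine isLeaf_of_saturated (range_nonempty g) hsat ?_
  rintro _ ⟨y, rfl⟩ _ ⟨z, rfl⟩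
  have : Std.Symm fun y z => F.leafRel (g y) (g z) := ⟨fun _ _ h => .symm _ _ h⟩
  exact PreconnectedSpace.induction₂ (fun y z => F.leafRel (g y) (g z))
    (eventually_leafRel_of_isEmbedding hg hsat) ⟨fun _ _ _ h h' => .trans _ _ _ h h'⟩ y z

end Foliation

theorem statement9_general {M : Type*} {N : Type*} [TopologicalSpace M] [T2Space M]
    [TopologicalSpace N] [ConnectedSpace N] {n q : ℕ} [ChartedSpace (Fin n → ℝ) N]
    (F : Foliation (M × N) n q) {D : Set M} (hD : Dense D)
    (hleaf : ∀ d ∈ D, F.IsLeaf {z : M × N | z.1 = d}) (x : M) :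
    F.IsLeaf {z : M × N | z.1 = x} := by
  have hsat : F.Saturated (Prod.fst ⁻¹' {x}) :=
    Foliation.saturated_fiber_of_dense continuous_fst isOpenMap_fst hD
      (fun d hd => (hleaf d hd).saturated) x
  have hrange : range (Prod.mk x : N → M × N) = {z | z.1 = x} :=
    Subset.antisymm (range_subset_iff.2 fun _ => rfl) fun z hz => ⟨z.2, Prod.ext hz.symm rfl⟩
  exact hrange ▸ Foliation.isLeaf_range_of_isEmbedding (isEmbedding_prodMkRight x) (hrange ▸ hsat)

/-- If a foliation of dimension `n` on a product `M × N` (with `N` a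
connected `n`-manifold) has `{d} × N` as a leaf for all `d` in a dense subset `D ⊆ M`,
then it is the trivial product foliation: `{x} × N` is a leaf for every `x ∈ M`. -/
theorem statement9 (m n : ℕ) (M N : Type) [TopologicalSpace M] [TopologicalSpace N]
    (hM : IsTopManifold M m) (hN : IsTopManifold N n) (hconn : ConnectedSpace N)
    (F : Foliation (M × N) n m) (D : Set M) (hD : Dense D)
    (hleaf : ∀ d ∈ D, F.IsLeaf {z : M × N | z.1 = d}) :
    ∀ x : M, F.IsLeaf {z : M × N | z.1 = x} := by
  have := hM.2.1
  obtain ⟨_⟩ := hN.nonempty_chartedSpace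
  exact statement9_general F hD hleaf
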